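/- Let S be a finite set of prime numbers and let a be a positive integer. There exists a constant C, depending only on S and a, such that whenever x and y are S-units with gcd(x, y) ≤ a and x + y is again an S-unit, one has max(|x|, |y|) ≤ C. -/

import Mathlib

/-- An `S`-unit: a nonzero integer all of whose prime divisors belong to `S`. -/
def IsSUnit (S : Finset ℕ) (x : ℤ) : Prop :=
  x ≠ 0 ∧ ∀ p : ℕ, p.Prime → (p : ℤ) ∣ x → p ∈ S

/-! It suffices to bound the primitive positive solutions of `x + y = z` in `S`-units. Integrating
`((s - a) * (s - b) * (s - c)) ^ n` over `[a, b]`, `[b, c]` and `[a, c]` gives a Padé relation: with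
`m = 2 * n + 1` and explicit integer combinations `A` of `y ^ i * z ^ j` and `B` of `z ^ i * x ^ j`,
where `i + j = n`, the number `z ^ m` divides `A * x ^ m - B * y ^ m`. For odd `n` the signs are
such that both `A` and `B` are positive.

Suppose a second solution `x' + y' = z'` has exponent vectors close to `m` times those of the
first, so that `x' ∣ x ^ m * w`, `x ^ m ∣ x' * w`, and so on, for a small `w`. Then `x' * y' * z'`
divides `w * (A * x ^ m * y' + B * y ^ m * x')`. This is a sum of positive terms, hence nonzero,
and comparing sizes gives `z' ≤ 2 * (16 * z) ^ n * w ^ 2`. As `z'` is roughly `z ^ m`, this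
bounds `z'` once `z` is large.

Were there infinitely many solutions, their exponent vectors divided by `log z` would stay in a
compact set and would accumulate, providing such pairs with `z` large and `z'` arbitrarily large. -/

open Filter Finset MeasureTheory

section PadeForm

theorem integral_pow_mul_one_sub_pow (m n : ℕ) :
    ∫ u in (0 : ℝ)..1, u ^ m * (1 - u) ^ n =
      (m.factorial * n.factorial : ℝ) / (m + n + 1).factorial := by
  have hbeta := Complex.betaIntegral_eq_Gamma_mul_div (m + 1) (n + 1)
    (by norm_cast; positivity) (by norm_cast; positivity)
  have hsum : (m + 1 + (n + 1) : ℂ) = (m + n + 1 : ℕ) + 1 := by push_cast; ring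
  rw [hsum] at hbeta
  simp only [Complex.betaIntegral, Complex.Gamma_nat_eq_factorial, add_sub_cancel_right,
    Complex.cpow_natCast] at hbeta
  apply Complex.ofReal_injective
  rw [← intervalIntegral.integral_ofReal]
  push_cast
  exact hbeta

/-- The coefficient of `t ^ n` in `((1 - u * t) * (1 - v * t)) ^ (-(n + 1))`. These forms are
the multipliers in the diagonal Padé relation between the `(2 * n + 1)`-st powers of `b - a`,
`c - b` and `c - a`. -/
def padeForm {R : Type*} [CommSemiring R] (n : ℕ) (u v : R) : R :=
  ∑ l ∈ antidiagonal n,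
    ((n + l.1).choose l.1 * (n + l.2).choose l.2 : ℕ) * (u ^ l.1 * v ^ l.2)

theorem map_padeForm {R R' : Type*} [CommSemiring R] [CommSemiring R'] (f : R →+* R') (n : ℕ)
    (u v : R) : f (padeForm n u v) = padeForm n (f u) (f v) := by
  simp only [padeForm, map_sum, map_mul, map_pow, map_natCast]

theorem padeForm_mul_mul {R : Type*} [CommSemiring R] (n : ℕ) (t u v : R) :
    padeForm n (t * u) (t * v) = t ^ n * padeForm n u v := by
  rw [padeForm, padeForm, mul_sum]
  refine sum_congr rfl fun l hl => ?_
  rw [← HasAntidiagonal.mem_antidiagonal.mp hl, pow_add]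
  ring

section Order

variable {R : Type*} [CommSemiring R] [PartialOrder R] [IsStrictOrderedRing R]

theorem padeForm_pos (n : ℕ) {u v : R} (hu : 0 < u) (hv : 0 < v) : 0 < padeForm n u v := by
  refine sum_pos (fun l _ => ?_) ⟨(n, 0), by simp⟩
  have h1 := Nat.choose_pos (Nat.le_add_left l.1 n)
  have h2 := Nat.choose_pos (Nat.le_add_left l.2 n)
  positivity

theorem padeForm_le (n : ℕ) {u v z : R} (hu : 0 ≤ u) (hv : 0 ≤ v) (huz : u ≤ z) (hvz : v ≤ z) :
    padeForm n u v ≤ (16 * z) ^ n := by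
  have hz : 0 ≤ z := hu.trans huz
  have hterm : ∀ l ∈ antidiagonal n,
      ((n + l.1).choose l.1 * (n + l.2).choose l.2 : ℕ) * (u ^ l.1 * v ^ l.2) ≤ (8 * z) ^ n := by
    intro l hl
    have hl : l.1 + l.2 = n := HasAntidiagonal.mem_antidiagonal.mp hl
    have hchoose : (n + l.1).choose l.1 * (n + l.2).choose l.2 ≤ 8 ^ n :=
      calc (n + l.1).choose l.1 * (n + l.2).choose l.2
          ≤ 2 ^ (n + l.1) * 2 ^ (n + l.2) :=
            Nat.mul_le_mul (Nat.choose_le_two_pow _ _) (Nat.choose_le_two_pow _ _)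
        _ = (2 ^ 3) ^ n := by rw [← pow_add, ← pow_mul]; congr 1; omega
    calc (((n + l.1).choose l.1 * (n + l.2).choose l.2 : ℕ) : R) * (u ^ l.1 * v ^ l.2)
        ≤ (8 ^ n : ℕ) * (z ^ l.1 * z ^ l.2) := by gcongr
      _ = (8 * z) ^ n := by rw [← pow_add, hl, mul_pow]; push_cast; rfl
  calc padeForm n u v ≤ (antidiagonal n).card • (8 * z) ^ n :=
        sum_le_card_nsmul _ _ _ hterm
    _ ≤ (2 ^ n) • (8 * z) ^ n := by
        rw [Nat.card_antidiagonal]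
        exact nsmul_le_nsmul_left (by positivity) (Nat.succ_le_of_lt n.lt_two_pow_self)
    _ = (16 * z) ^ n := by rw [nsmul_eq_mul, Nat.cast_pow, ← mul_pow]; congr 1; push_cast; ring

end Order

theorem choose_mul_factorial_mul_factorial_eq {n l m : ℕ} (hn : l + m = n) :
    n.choose l * ((n + l).factorial * (n + m).factorial) =
      n.factorial ^ 3 * ((n + l).choose l * (n + m).choose m) := by
  have hlm : n.choose l * l.factorial * m.factorial = n.factorial := by
    rw [← hn, Nat.choose_symm_add, Nat.add_choose_mul_factorial_mul_factorial]
  rw [← Nat.add_choose_mul_factorial_mul_factorial n l,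
    ← Nat.add_choose_mul_factorial_mul_factorial n m]
  linear_combination
    n.factorial ^ 2 * ((n + l).choose l * (n + m).choose m) * hlm

theorem factorial_mul_integral_eq_padeForm (n : ℕ) (u v : ℝ) :
    (3 * n + 1).factorial * ∫ t in (0 : ℝ)..1, t ^ n * (1 - t) ^ n * (t * u + (1 - t) * v) ^ n =
      n.factorial ^ 3 * padeForm n u v := by
  have hexpand : ∀ t : ℝ, t ^ n * (1 - t) ^ n * (t * u + (1 - t) * v) ^ n =
      ∑ l ∈ antidiagonal n,
        n.choose l.1 * (u ^ l.1 * v ^ l.2) * (t ^ (n + l.1) * (1 - t) ^ (n + l.2)) := by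
    intro t
    rw [(Commute.all _ _).add_pow', mul_sum]
    refine sum_congr rfl fun l _ => ?_
    rw [nsmul_eq_mul, mul_pow t, mul_pow (1 - t)]
    ring
  simp only [hexpand]
  rw [intervalIntegral.integral_finsetSum
    fun l _ => Continuous.intervalIntegrable (by fun_prop) _ _, padeForm, mul_sum, mul_sum]
  refine sum_congr rfl fun l hl => ?_
  have hl : l.1 + l.2 = n := HasAntidiagonal.mem_antidiagonal.mp hl
  have hfactorial : (n.choose l.1 * ((n + l.1).factorial * (n + l.2).factorial) : ℝ) =
      n.factorial ^ 3 * ((n + l.1).choose l.1 * (n + l.2).choose l.2 : ℕ) := by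
    exact_mod_cast choose_mul_factorial_mul_factorial_eq hl
  rw [intervalIntegral.integral_const_mul, integral_pow_mul_one_sub_pow,
    show n + l.1 + (n + l.2) + 1 = 3 * n + 1 by omega]
  field_simp
  linear_combination u ^ l.1 * v ^ l.2 * hfactorial

theorem factorial_mul_integral_eq_pow_mul_padeForm (n : ℕ) (a b c : ℝ) :
    (3 * n + 1).factorial * ∫ s in a..b, ((s - a) * (s - b) * (s - c)) ^ n =
      (-1) ^ n * n.factorial ^ 3 * ((b - a) ^ (2 * n + 1) * padeForm n (b - c) (a - c)) := by
  have hsubst := intervalIntegral.mul_integral_comp_mul_add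
    (f := fun s => ((s - a) * (s - b) * (s - c)) ^ n) (a := 0) (b := 1) (b - a) a
  have hintegrand : ∀ t : ℝ, (((b - a) * t + a - a) * ((b - a) * t + a - b) *
      ((b - a) * t + a - c)) ^ n = (-1) ^ n * (b - a) ^ (2 * n) *
        (t ^ n * (1 - t) ^ n * (t * (b - c) + (1 - t) * (a - c)) ^ n) := by
    intro t
    rw [pow_mul, ← mul_pow, ← mul_pow, ← mul_pow, ← mul_pow]
    ring
  simp only [hintegrand, mul_zero, zero_add, mul_one, sub_add_cancel,
    intervalIntegral.integral_const_mul] at hsubst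
  rw [← hsubst]
  linear_combination (-1) ^ n * (b - a) ^ (2 * n + 1) *
    factorial_mul_integral_eq_padeForm n (b - c) (a - c)

theorem padeForm_relation (n : ℕ) (a b c : ℝ) :
    (b - a) ^ (2 * n + 1) * padeForm n (b - c) (a - c) +
      (c - b) ^ (2 * n + 1) * padeForm n (c - a) (b - a) =
        (c - a) ^ (2 * n + 1) * padeForm n (c - b) (a - b) := by
  have hint : ∀ s t : ℝ, IntervalIntegrable (fun s => ((s - a) * (s - b) * (s - c)) ^ n)
      volume s t := fun s t => Continuous.intervalIntegrable (by fun_prop) s t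
  have hadd := intervalIntegral.integral_add_adjacent_intervals (hint a b) (hint b c)
  have hab := factorial_mul_integral_eq_pow_mul_padeForm n a b c
  have hbc := factorial_mul_integral_eq_pow_mul_padeForm n b c a
  have hac := factorial_mul_integral_eq_pow_mul_padeForm n a c b
  rw [show (fun s => ((s - b) * (s - c) * (s - a)) ^ n) = fun s => ((s - a) * (s - b) * (s - c)) ^ n
    by ext; ring] at hbc
  rw [show (fun s => ((s - a) * (s - c) * (s - b)) ^ n) = fun s => ((s - a) * (s - b) * (s - c)) ^ n
    by ext; ring] at hac
  have hne : (-1 : ℝ) ^ n * n.factorial ^ 3 ≠ 0 := by positivity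
  apply mul_left_cancel₀ hne
  linear_combination (3 * n + 1).factorial * hadd - hab - hbc + hac

theorem pow_dvd_pow_mul_padeForm_sub {n : ℕ} (hn : Odd n) (x y : ℤ) :
    (x + y) ^ (2 * n + 1) ∣
      x ^ (2 * n + 1) * padeForm n y (x + y) - y ^ (2 * n + 1) * padeForm n (x + y) x := by
  have hrel : x ^ (2 * n + 1) * padeForm n (-y) (-(x + y)) +
      y ^ (2 * n + 1) * padeForm n (x + y) x =
        (x + y) ^ (2 * n + 1) * padeForm n y (-x) := by
    have h := padeForm_relation n 0 x (x + y)
    have hcast := map_padeForm (Int.castRingHom ℝ) n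
    simp only [eq_intCast] at hcast
    apply Int.cast_injective (α := ℝ)
    push_cast [hcast]
    convert h using 3 <;> ring_nf
  have hneg := padeForm_mul_mul n (-1) y (x + y)
  rw [hn.neg_one_pow, neg_one_mul, neg_one_mul, neg_one_mul] at hneg
  exact ⟨-padeForm n y (-x), by rw [hneg] at hrel; linear_combination -hrel⟩

end PadeForm

section GapPrinciple

variable {n : ℕ} {x y x' y' w : ℤ}

theorem mul_mul_add_dvd_mul_padeForm (hn : Odd n) (hcop : IsCoprime x' y')
    (hx : x' ∣ x ^ (2 * n + 1) * w) (hy : y' ∣ y ^ (2 * n + 1) * w)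
    (hz : x' + y' ∣ (x + y) ^ (2 * n + 1) * w) :
    x' * y' * (x' + y') ∣ w * (x ^ (2 * n + 1) * padeForm n y (x + y) * y' +
      y ^ (2 * n + 1) * padeForm n (x + y) x * x') := by
  have hxz : IsCoprime x' (x' + y') := by simpa [add_comm] using hcop.add_mul_left_right 1
  have hyz : IsCoprime y' (x' + y') := by simpa using hcop.symm.add_mul_left_right 1
  set A := padeForm n y (x + y)
  set B := padeForm n (x + y) x
  refine (hxz.mul_left hyz).mul_dvd (hcop.mul_dvd ?_ ?_) ?_
  · exact (dvd_add (hx.mul_right (A * y')) (dvd_mul_left x' (w * y ^ (2 * n + 1) * B))).trans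
      (dvd_of_eq (by ring))
  · exact (dvd_add (hy.mul_right (B * x')) (dvd_mul_left y' (w * x ^ (2 * n + 1) * A))).trans
      (dvd_of_eq (by ring))
  · have hrel : x' + y' ∣ w * (x ^ (2 * n + 1) * A - y ^ (2 * n + 1) * B) := by
      rw [mul_comm w]
      exact hz.trans (mul_dvd_mul_right (pow_dvd_pow_mul_padeForm_sub hn x y) w)
    exact (dvd_add (hrel.mul_right y') (dvd_mul_left (x' + y') (w * y ^ (2 * n + 1) * B))).trans
      (dvd_of_eq (by ring))

theorem add_le_of_dvd_pow_mul (hn : Odd n) (hx₀ : 0 < x) (hy₀ : 0 < y) (hx'₀ : 0 < x')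
    (hy'₀ : 0 < y') (hw₀ : 0 < w) (hcop : IsCoprime x' y')
    (hx : x' ∣ x ^ (2 * n + 1) * w) (hx' : x ^ (2 * n + 1) ∣ x' * w)
    (hy : y' ∣ y ^ (2 * n + 1) * w) (hy' : y ^ (2 * n + 1) ∣ y' * w)
    (hz : x' + y' ∣ (x + y) ^ (2 * n + 1) * w) :
    x' + y' ≤ 2 * (16 * (x + y)) ^ n * w ^ 2 := by
  have hA₀ := padeForm_pos n hy₀ (add_pos hx₀ hy₀)
  have hB₀ := padeForm_pos n (add_pos hx₀ hy₀) hx₀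
  have hA : padeForm n y (x + y) ≤ (16 * (x + y)) ^ n :=
    padeForm_le n (by lia) (by lia) (by lia) le_rfl
  have hB : padeForm n (x + y) x ≤ (16 * (x + y)) ^ n :=
    padeForm_le n (by lia) (by lia) le_rfl (by lia)
  have hxw : x ^ (2 * n + 1) ≤ x' * w := Int.le_of_dvd (by positivity) hx'
  have hyw : y ^ (2 * n + 1) ≤ y' * w := Int.le_of_dvd (by positivity) hy'
  refine le_of_mul_le_mul_left ?_ (mul_pos hx'₀ hy'₀)
  calc x' * y' * (x' + y')
      ≤ w * (x ^ (2 * n + 1) * padeForm n y (x + y) * y' +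
          y ^ (2 * n + 1) * padeForm n (x + y) x * x') :=
        Int.le_of_dvd (by positivity) (mul_mul_add_dvd_mul_padeForm hn hcop hx hy hz)
    _ ≤ w * (x' * w * (16 * (x + y)) ^ n * y' + y' * w * (16 * (x + y)) ^ n * x') := by gcongr
    _ = x' * y' * (2 * (16 * (x + y)) ^ n * w ^ 2) := by ring

end GapPrinciple

section Exponents

theorem dvd_mul_prod_pow {S : Finset ℕ} (hS : ∀ p ∈ S, p.Prime) {m n d : ℕ}
    (hm : m ∈ Nat.factoredNumbers S) (hn : n ≠ 0)
    (hle : ∀ p ∈ S, m.factorization p ≤ n.factorization p + d) :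
    m ∣ n * (∏ p ∈ S, p) ^ d := by
  have hprod : ∏ p ∈ S, p ≠ 0 := prod_ne_zero_iff.mpr fun p hp => (hS p hp).ne_zero
  rw [← Nat.factorization_prime_le_iff_dvd hm.1 (mul_ne_zero hn (pow_ne_zero d hprod))]
  intro p hp
  by_cases hpm : p ∣ m
  · have hpS := Nat.mem_factoredNumbers'.mp hm p hp hpm
    have hone : 1 ≤ (∏ p ∈ S, p).factorization p :=
      (hp.dvd_iff_one_le_factorization hprod).mp (dvd_prod_of_mem _ hpS)
    calc m.factorization p ≤ n.factorization p + d * 1 := by simpa using hle p hpS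
      _ ≤ n.factorization p + d * (∏ p ∈ S, p).factorization p := by gcongr
      _ = (n * (∏ p ∈ S, p) ^ d).factorization p := by
        rw [Nat.factorization_mul hn (pow_ne_zero d hprod), Nat.factorization_pow]
        rfl
  · rw [Nat.factorization_eq_zero_of_not_dvd hpm]
    exact Nat.zero_le _

theorem factorization_le_two_mul_log {n : ℕ} (hn : n ≠ 0) (p : ℕ) :
    (n.factorization p : ℝ) ≤ 2 * Real.log n := by
  by_cases hp : p.Prime
  · have hpow : 2 ^ n.factorization p ≤ n :=
      (Nat.pow_le_pow_left hp.two_le _).trans (Nat.ordProj_le p hn)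
    have hlog : Real.log (2 ^ n.factorization p) ≤ Real.log n :=
      Real.log_le_log (by positivity) (by exact_mod_cast hpow)
    rw [Real.log_pow] at hlog
    nlinarith [Real.log_two_gt_d9, (n.factorization p).cast_nonneg (α := ℝ)]
  · rw [Nat.factorization_eq_zero_of_not_prime n hp]
    have := Real.log_natCast_nonneg n
    simpa

/-- The vector of exponents of the primes `p ∈ S` in `n`, in units of a height `h`. -/
noncomputable def scaledExponents (S : Finset ℕ) (h : ℝ) (n : ℕ) : S → ℝ :=
  fun p => n.factorization p / h

variable {S : Finset ℕ} {h h' ε : ℝ}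

theorem scaledExponents_mem_Icc (hh : 0 < h) {n : ℕ} (hn : n ≠ 0) (hnh : Real.log n ≤ h) :
    scaledExponents S h n ∈ Set.Icc (fun _ => 0) (fun _ => 2) := by
  refine ⟨fun p => by unfold scaledExponents; positivity, fun p => ?_⟩
  rw [scaledExponents, div_le_iff₀ hh]
  linarith [factorization_le_two_mul_log hn p]

theorem abs_factorization_sub_mul_le (hh : 0 < h) (hh' : 0 < h') {a a' m p : ℕ} (ha : a ≠ 0)
    (hah : Real.log a ≤ h) (hm : |h' - m * h| ≤ 3 * h)
    (hdist : dist (scaledExponents S h' a') (scaledExponents S h a) ≤ ε) (hp : p ∈ S) :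
    |(a'.factorization p - m * a.factorization p : ℝ)| ≤ ε * h' + 6 * h := by
  have hclose : |a'.factorization p / h' - a.factorization p / h| ≤ ε :=
    (dist_le_pi_dist _ _ (⟨p, hp⟩ : S)).trans hdist
  have hratio : |(a.factorization p / h : ℝ)| ≤ 2 := by
    rw [abs_of_nonneg (by positivity), div_le_iff₀ hh]
    linarith [factorization_le_two_mul_log ha p]
  calc |(a'.factorization p - m * a.factorization p : ℝ)|
      = |(a'.factorization p / h' - a.factorization p / h) * h' +
          (a.factorization p / h) * (h' - m * h)| := by
        congr 1
        field_simp
        ring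
    _ ≤ |a'.factorization p / h' - a.factorization p / h| * |h'| +
          |(a.factorization p / h : ℝ)| * |h' - m * h| := by
        rw [← abs_mul, ← abs_mul]
        exact abs_add_le _ _
    _ ≤ ε * h' + 2 * (3 * h) := by rw [abs_of_pos hh']; gcongr
    _ = ε * h' + 6 * h := by ring

theorem dvd_mul_prod_pow_of_dist_le (hS : ∀ p ∈ S, p.Prime) (hh : 0 < h) (hh' : 0 < h')
    {a a' m d : ℕ} (ha : a ∈ Nat.factoredNumbers S) (ha' : a' ∈ Nat.factoredNumbers S)
    (hah : Real.log a ≤ h) (hm : |h' - m * h| ≤ 3 * h)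
    (hdist : dist (scaledExponents S h' a') (scaledExponents S h a) ≤ ε)
    (hd : ε * h' + 6 * h ≤ d) :
    a' ∣ a ^ m * (∏ p ∈ S, p) ^ d ∧ a ^ m ∣ a' * (∏ p ∈ S, p) ^ d := by
  have hpow : ∀ p, (a ^ m).factorization p = m * a.factorization p := fun p => by
    rw [Nat.factorization_pow]
    rfl
  have hexp : ∀ p ∈ S, |(a'.factorization p - m * a.factorization p : ℝ)| ≤ d := fun p hp =>
    (abs_factorization_sub_mul_le hh hh' ha.1 hah hm hdist hp).trans hd
  constructor
  · refine dvd_mul_prod_pow hS ha' (pow_ne_zero m ha.1) fun p hp => ?_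
    have := (abs_le.mp (hexp p hp)).2
    rw [hpow, ← Nat.cast_le (α := ℝ)]
    push_cast
    linarith
  · refine dvd_mul_prod_pow hS ?_ ha'.1 fun p hp => ?_
    · exact Nat.mem_factoredNumbers'.mpr fun p hp hpa =>
        Nat.mem_factoredNumbers'.mp ha p hp (hp.dvd_of_dvd_pow hpa)
    · have := (abs_le.mp (hexp p hp)).1
      rw [hpow, ← Nat.cast_le (α := ℝ)]
      push_cast
      linarith

end Exponents

theorem frequently_frequently_dist_lt_of_isCompact {α E : Type*} [PseudoMetricSpace E] {K : Set E}
    (hK : IsCompact K) {l : Filter α} {u : α → E} (hu : ∃ᶠ i in l, u i ∈ K) {ε : ℝ} (hε : 0 < ε) :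
    ∃ᶠ i in l, ∃ᶠ j in l, dist (u j) (u i) < ε := by
  obtain ⟨a, -, ha⟩ := hK.exists_mapClusterPt_of_frequently hu
  have hnear : ∃ᶠ i in l, dist (u i) a < ε / 2 :=
    ha.frequently (Metric.ball_mem_nhds a (half_pos hε))
  refine hnear.mono fun i hi => hnear.mono fun j hj => ?_
  linarith [dist_triangle_right (u j) (u i) a]

theorem exists_odd_abs_sub_mul_le {h h' : ℝ} (hh : 0 < h) (hh' : 0 ≤ h') :
    ∃ n : ℕ, Odd n ∧ |h' - (2 * n + 1 : ℕ) * h| ≤ 3 * h ∧ n * h ≤ h' / 2 + h := by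
  have hfloor := Nat.floor_le (div_nonneg hh' (by positivity : 0 ≤ 4 * h))
  have hlt := Nat.lt_floor_add_one (h' / (4 * h))
  set q := ⌊h' / (4 * h)⌋₊
  rw [le_div_iff₀ (by positivity)] at hfloor
  rw [div_lt_iff₀ (by positivity)] at hlt
  refine ⟨2 * q + 1, odd_two_mul_add_one q, ?_, ?_⟩
  · rw [abs_le]
    push_cast
    constructor <;> linarith
  · push_cast
    linarith

theorem log_le_of_le_mul_pow_mul_pow {c c' W n d : ℕ} (hc' : 0 < c') (hc : 0 < c) (hW : 0 < W)
    (hle : c' ≤ 2 * (16 * c) ^ n * (W ^ d) ^ 2) :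
    Real.log c' ≤ Real.log 2 + n * (Real.log 16 + Real.log c) + 2 * (d * Real.log W) :=
  calc Real.log c' ≤ Real.log (2 * (16 * c) ^ n * ((W : ℝ) ^ d) ^ 2) :=
        Real.log_le_log (by positivity) (by exact_mod_cast hle)
    _ = Real.log 2 + n * (Real.log 16 + Real.log c) + 2 * (d * Real.log W) := by
        rw [Real.log_mul (by positivity) (by positivity),
          Real.log_mul (by positivity) (by positivity), Real.log_pow,
          Real.log_mul (by positivity) (by positivity), Real.log_pow, Real.log_pow,
          Nat.cast_ofNat]

section SUnitEquation

/-- The primitive positive solutions of the `S`-unit equation `a + b = c`, encoded as the pairs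
`(a, b)` of coprime natural numbers. -/
def primitiveSolutions (S : Finset ℕ) : Set (ℕ × ℕ) :=
  {s | s.1 ∈ Nat.factoredNumbers S ∧ s.2 ∈ Nat.factoredNumbers S ∧
    s.1 + s.2 ∈ Nat.factoredNumbers S ∧ s.1.Coprime s.2}

/-- The logarithmic height of a solution `(a, b)` of `a + b = c`: the logarithm of its largest
entry `c`. -/
noncomputable def logHeight (s : ℕ × ℕ) : ℝ :=
  Real.log (s.1 + s.2 : ℕ)

/-- The exponents of the primes of `S` in the three entries `a`, `b`, `c` of a solution, in units
of its height. Solutions with nearby profiles are multiplicatively close to powers of each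
other. -/
noncomputable def profile (S : Finset ℕ) (s : ℕ × ℕ) : (S → ℝ) × (S → ℝ) × (S → ℝ) :=
  (scaledExponents S (logHeight s) s.1, scaledExponents S (logHeight s) s.2,
    scaledExponents S (logHeight s) (s.1 + s.2))

variable {S : Finset ℕ} {s t : ℕ × ℕ}

theorem logHeight_pos (hs : s ∈ primitiveSolutions S) : 0 < logHeight s := by
  have h1 := Nat.pos_of_ne_zero hs.1.1
  have h2 := Nat.pos_of_ne_zero hs.2.1.1
  exact Real.log_pos (by exact_mod_cast (by lia : 1 < s.1 + s.2))

theorem log_le_logHeight {a : ℕ} (ha : a ≠ 0) (has : a ≤ s.1 + s.2) :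
    Real.log a ≤ logHeight s :=
  Real.log_le_log (by positivity) (by exact_mod_cast has)

theorem profile_mem_Icc (hs : s ∈ primitiveSolutions S) :
    profile S s ∈ Set.Icc (fun _ => 0, fun _ => 0, fun _ => 0)
      (fun _ => 2, fun _ => 2, fun _ => 2) := by
  have hmem : ∀ a ≠ 0, a ≤ s.1 + s.2 → scaledExponents S (logHeight s) a ∈
      Set.Icc (fun _ => 0) (fun _ => 2) := fun a ha has =>
    scaledExponents_mem_Icc (logHeight_pos hs) ha (log_le_logHeight ha has)
  have h1 := hmem s.1 hs.1.1 (Nat.le_add_right _ _)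
  have h2 := hmem s.2 hs.2.1.1 (Nat.le_add_left _ _)
  have h3 := hmem (s.1 + s.2) hs.2.2.1.1 le_rfl
  exact ⟨⟨h1.1, h2.1, h3.1⟩, ⟨h1.2, h2.2, h3.2⟩⟩

theorem add_le_of_dist_profile_le (hS : ∀ p ∈ S, p.Prime) (hs : s ∈ primitiveSolutions S)
    (ht : t ∈ primitiveSolutions S) {ε : ℝ} (hdist : dist (profile S t) (profile S s) ≤ ε)
    {n d : ℕ} (hn : Odd n)
    (hm : |logHeight t - (2 * n + 1 : ℕ) * logHeight s| ≤ 3 * logHeight s)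
    (hd : ε * logHeight t + 6 * logHeight s ≤ d) :
    t.1 + t.2 ≤ 2 * (16 * (s.1 + s.2)) ^ n * ((∏ p ∈ S, p) ^ d) ^ 2 := by
  have hdvd := fun {a a' : ℕ} ha ha' has hdist' =>
    dvd_mul_prod_pow_of_dist_le (a := a) (a' := a') hS (logHeight_pos hs) (logHeight_pos ht)
      ha ha' (log_le_logHeight ha.1 has) hm hdist' hd
  simp only [profile, Prod.dist_eq, max_le_iff] at hdist
  obtain ⟨hs₁, hs₂, hs₃, -⟩ := hs
  obtain ⟨ht₁, ht₂, ht₃, hcop⟩ := ht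
  obtain ⟨hx, hx'⟩ := hdvd hs₁ ht₁ (Nat.le_add_right _ _) hdist.1
  obtain ⟨hy, hy'⟩ := hdvd hs₂ ht₂ (Nat.le_add_left _ _) hdist.2.1
  obtain ⟨hz, -⟩ := hdvd hs₃ ht₃ le_rfl hdist.2.2
  have hW : 0 < ∏ p ∈ S, (p : ℤ) := prod_pos fun p hp => Int.natCast_pos.mpr (hS p hp).pos
  have hpos : ∀ {a : ℕ}, a ∈ Nat.factoredNumbers S → (0 : ℤ) < a := fun ha =>
    Int.natCast_pos.mpr (Nat.pos_of_ne_zero ha.1)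
  zify at hx hx' hy hy' hz ⊢
  exact add_le_of_dvd_pow_mul hn (hpos hs₁) (hpos hs₂) (hpos ht₁) (hpos ht₂) (pow_pos hW d)
    hcop.isCoprime hx hx' hy hy' hz

theorem logHeight_le_of_dist_profile_le (hS : ∀ p ∈ S, p.Prime) (hs : s ∈ primitiveSolutions S)
    (ht : t ∈ primitiveSolutions S) {ε : ℝ}
    (hε : ε * Real.log (∏ p ∈ S, p : ℕ) ≤ 1 / 16) (hheight : 4 * Real.log 16 ≤ logHeight s)
    (hdist : dist (profile S t) (profile S s) ≤ ε) :
    logHeight t ≤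
      4 * (1 + 5 / 4 * logHeight s + (12 * logHeight s + 2) * Real.log (∏ p ∈ S, p : ℕ)) := by
  have hh := logHeight_pos hs
  have hh' := logHeight_pos ht
  have hε₀ : 0 ≤ ε := dist_nonneg.trans hdist
  obtain ⟨n, hn, hm, hnh⟩ := exists_odd_abs_sub_mul_le hh hh'.le
  have hd := Nat.le_ceil (ε * logHeight t + 6 * logHeight s)
  have hd' := Nat.ceil_lt_add_one
    (by positivity : 0 ≤ ε * logHeight t + 6 * logHeight s)
  have hle := add_le_of_dist_profile_le hS hs ht hdist hn hm hd
  have hW : 0 < ∏ p ∈ S, p := prod_pos fun p hp => (hS p hp).pos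
  set d := ⌈ε * logHeight t + 6 * logHeight s⌉₊
  set W := ∏ p ∈ S, p
  have hlog : logHeight t ≤
      Real.log 2 + n * (Real.log 16 + logHeight s) + 2 * (d * Real.log W) :=
    log_le_of_le_mul_pow_mul_pow (Nat.pos_of_ne_zero ht.2.2.1.1)
      (Nat.pos_of_ne_zero hs.2.2.1.1) hW hle
  have hn16 : n * Real.log 16 ≤ 1 / 4 * (logHeight t / 2 + logHeight s) := by
    nlinarith [n.cast_nonneg (α := ℝ)]
  have hdW : d * Real.log W ≤ logHeight t / 16 + (6 * logHeight s + 1) * Real.log W := by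
    calc d * Real.log W ≤ (ε * logHeight t + 6 * logHeight s + 1) * Real.log W := by
          have := Real.log_natCast_nonneg W
          gcongr
      _ ≤ logHeight t / 16 + (6 * logHeight s + 1) * Real.log W := by
          linarith [mul_le_mul_of_nonneg_right hε hh'.le]
  linarith [Real.log_two_lt_d9]

theorem exists_dist_profile_le_of_unbounded
    (hunbounded : ∀ C : ℕ, ∃ s ∈ primitiveSolutions S, C < s.1 + s.2) {ε : ℝ} (hε : 0 < ε)
    (L : ℝ) :
    ∃ s ∈ primitiveSolutions S, L ≤ logHeight s ∧
      ∀ B : ℝ, ∃ t ∈ primitiveSolutions S, B < logHeight t ∧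
        dist (profile S t) (profile S s) ≤ ε := by
  choose s hs hlt using hunbounded
  have hlim : Tendsto (fun i => logHeight (s i)) atTop atTop :=
    Real.tendsto_log_atTop.comp <| tendsto_natCast_atTop_atTop.comp <|
      tendsto_atTop_mono (fun i => (hlt i).le) tendsto_id
  have hnear := frequently_frequently_dist_lt_of_isCompact isCompact_Icc
    (Frequently.of_forall (f := atTop) fun i => profile_mem_Icc (hs i)) hε
  obtain ⟨i, hi, hL⟩ := (hnear.and_eventually (hlim.eventually_ge_atTop L)).exists
  refine ⟨s i, hs i, hL, fun B => ?_⟩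
  obtain ⟨j, hj, hB⟩ := (hi.and_eventually (hlim.eventually_gt_atTop B)).exists
  exact ⟨s j, hs j, hB, hj.le⟩

theorem exists_forall_primitiveSolutions_add_le (hS : ∀ p ∈ S, p.Prime) :
    ∃ C : ℕ, ∀ s ∈ primitiveSolutions S, s.1 + s.2 ≤ C := by
  by_contra! hunbounded
  have hW := Real.log_natCast_nonneg (∏ p ∈ S, p)
  set D := Real.log (∏ p ∈ S, p : ℕ)
  have hε : 0 < 1 / (16 * (D + 1)) := by positivity
  have hεD : 1 / (16 * (D + 1)) * D ≤ 1 / 16 := by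
    rw [div_mul_eq_mul_div, div_le_iff₀ (by positivity)]
    linarith
  obtain ⟨s, hs, hheight, hsimilar⟩ :=
    exists_dist_profile_le_of_unbounded hunbounded hε (4 * Real.log 16)
  obtain ⟨t, ht, hlarge, hdist⟩ := hsimilar
    (4 * (1 + 5 / 4 * logHeight s + (12 * logHeight s + 2) * D))
  exact hlarge.not_ge (logHeight_le_of_dist_profile_le hS hs ht hεD hheight hdist)

end SUnitEquation

section Integers

variable {S : Finset ℕ} {x y : ℤ}

theorem IsSUnit.natAbs_mem_factoredNumbers (hx : IsSUnit S x) :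
    x.natAbs ∈ Nat.factoredNumbers S :=
  Nat.mem_factoredNumbers'.mpr fun p hp hpx => hx.2 p hp (Int.natCast_dvd.mpr hpx)

theorem IsSUnit.of_dvd (hy : IsSUnit S y) (hxy : x ∣ y) : IsSUnit S x :=
  ⟨fun hx => hy.1 (zero_dvd_iff.mp (hx ▸ hxy)), fun p hp hpx => hy.2 p hp (hpx.trans hxy)⟩

theorem exists_forall_isCoprime_abs_le (hS : ∀ p ∈ S, p.Prime) :
    ∃ C : ℕ, ∀ x y : ℤ, IsSUnit S x → IsSUnit S y → IsSUnit S (x + y) → IsCoprime x y →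
      |x| ≤ C ∧ |y| ≤ C := by
  obtain ⟨C, hC⟩ := exists_forall_primitiveSolutions_add_le hS
  refine ⟨C, fun x y hx hy hxy hcop => ?_⟩
  have hbound : ∀ u v w : ℤ, IsSUnit S u → IsSUnit S v → IsSUnit S w → IsCoprime u v →
      u.natAbs + v.natAbs = w.natAbs → w.natAbs ≤ C := fun u v w hu hv hw huv h =>
    h ▸ hC (u.natAbs, v.natAbs) ⟨hu.natAbs_mem_factoredNumbers, hv.natAbs_mem_factoredNumbers,
      h ▸ hw.natAbs_mem_factoredNumbers, Int.isCoprime_iff_nat_coprime.mp huv⟩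
  simp only [Int.abs_eq_natAbs, Nat.cast_le]
  have hcop_x : IsCoprime x (x + y) := by simpa [add_comm] using hcop.add_mul_left_right 1
  have hcop_y : IsCoprime y (x + y) := by simpa using hcop.symm.add_mul_left_right 1
  have htrichotomy : x.natAbs + y.natAbs = (x + y).natAbs ∨
      x.natAbs + (x + y).natAbs = y.natAbs ∨ y.natAbs + (x + y).natAbs = x.natAbs := by lia
  rcases htrichotomy with h | h | h
  · have := hbound x y (x + y) hx hy hxy hcop h
    lia
  · have := hbound x (x + y) y hx hxy hy hcop_x h
    lia
  · have := hbound y (x + y) x hy hxy hx hcop_y h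
    lia

end Integers

theorem bounded_sums_of_two_S_units
    (S : Finset ℕ) (hS : ∀ p ∈ S, p.Prime) (a : ℕ) (ha : 0 < a) :
    ∃ C : ℤ, ∀ x y : ℤ, IsSUnit S x → IsSUnit S y → Int.gcd x y ≤ a →
      IsSUnit S (x + y) → max |x| |y| ≤ C := by
  obtain ⟨C, hC⟩ := exists_forall_isCoprime_abs_le hS
  refine ⟨C * a, fun x y hx hy hgcd hxy => ?_⟩
  obtain ⟨u, v, huv, hxu, hyv⟩ := Int.exists_gcd_one (Int.gcd_pos_of_ne_zero_left y hx.1)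
  set g := Int.gcd x y
  have hu : IsSUnit S u := hx.of_dvd ⟨g, hxu⟩
  have hv : IsSUnit S v := hy.of_dvd ⟨g, hyv⟩
  have huv_add : IsSUnit S (u + v) := hxy.of_dvd ⟨g, by rw [hxu, hyv]; ring⟩
  obtain ⟨hu_le, hv_le⟩ := hC u v hu hv huv_add (Int.isCoprime_iff_gcd_eq_one.mpr huv)
  rw [hxu, hyv, abs_mul, abs_mul, Nat.abs_cast]
  refine max_le ?_ ?_ <;> gcongr
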